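/- arXiv:2212.11567 — 2 statements merged into one kernel-verified Lean document; each statement's English description precedes it below -/
import Mathlib

section
/- For every K ∈ ℝ^{m×p}, E[‖D K (C x + v)‖₂²] ≥ σ_min(Dᵀ D) (σ_min(C V_xx Cᵀ) + σ_min(V_vv)) ‖K‖_F². -/
open MeasureTheory ProbabilityTheory Matrix

/-- Operator (spectral) norm of a real matrix. -/
noncomputable def opNorm {α β : Type*} [Fintype α] [Fintype β] [DecidableEq β]
    (A : Matrix α β ℝ) : ℝ :=
  ‖LinearMap.toContinuousLinearMap (Matrix.toEuclideanLin A)‖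

/-- Frobenius norm of a real matrix. -/
noncomputable def frobNorm {α β : Type*} [Fintype α] [Fintype β] (A : Matrix α β ℝ) : ℝ :=
  Real.sqrt (∑ i, ∑ j, (A i j) ^ 2)

/-- Smallest singular value of a real square matrix. -/
noncomputable def sigmaMin {α : Type*} [Fintype α] [DecidableEq α] (A : Matrix α α ℝ) : ℝ :=
  sInf {c | ∃ x : EuclideanSpace ℝ α, ‖x‖ = 1 ∧ c = ‖Matrix.toEuclideanLin A x‖}

/-!
For `z = C x + v` the absence of correlation between `x` and `v` gives
`W := E[z zᵀ] = C V_xx Cᵀ + V_vv`, hence `E[‖B z‖²] = tr (B W Bᵀ)` with `B = D K`. A positive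
semidefinite `A` satisfies `σ_min(A) I ≤ A` in the Loewner order, and `s I ≤ A` implies
`s ‖B‖_F² ≤ tr (B A Bᵀ)`. This bound is applied twice: to `A = W`, and, because
`‖D K‖_F² = tr (Kᵀ (Dᵀ D) K)`, to `A = Dᵀ D`.
-/

section Frobenius

variable {α β : Type*} [Fintype α] [Fintype β]

lemma frobNorm_sq (A : Matrix α β ℝ) : frobNorm A ^ 2 = (A * Aᵀ).trace := by
  rw [frobNorm, Real.sq_sqrt (by positivity)]
  simp only [trace, diag_apply, mul_apply, transpose_apply, sq]

lemma frobNorm_transpose (A : Matrix α β ℝ) : frobNorm Aᵀ = frobNorm A := by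
  simp only [frobNorm, transpose_apply]
  rw [Finset.sum_comm]

end Frobenius

section Loewner

open scoped MatrixOrder

variable {α β γ : Type*} [Fintype α] [Fintype β] [Fintype γ] [DecidableEq α]

lemma sigmaMin_nonneg (A : Matrix α α ℝ) : 0 ≤ sigmaMin A := by
  refine Real.sInf_nonneg ?_
  rintro _ ⟨x, -, rfl⟩
  exact norm_nonneg _

lemma sigmaMin_le_norm (A : Matrix α α ℝ) {x : EuclideanSpace ℝ α} (hx : ‖x‖ = 1) :
    sigmaMin A ≤ ‖toEuclideanLin A x‖ := by
  refine csInf_le ⟨0, ?_⟩ ⟨x, hx, rfl⟩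
  rintro _ ⟨y, -, rfl⟩
  exact norm_nonneg _

lemma sigmaMin_le_abs_eigenvalues {A : Matrix α α ℝ} (hA : A.IsHermitian) (i : α) :
    sigmaMin A ≤ |hA.eigenvalues i| := by
  have hunit : ‖hA.eigenvectorBasis i‖ = 1 := hA.eigenvectorBasis.norm_eq_one i
  have heigen : toEuclideanLin A (hA.eigenvectorBasis i) =
      hA.eigenvalues i • hA.eigenvectorBasis i := by
    rw [toLpLin_apply, hA.mulVec_eigenvectorBasis]
    rfl
  simpa [heigen, norm_smul, hunit] using sigmaMin_le_norm A hunit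

lemma sigmaMin_smul_one_le {A : Matrix α α ℝ} (hA : A.PosSemidef) : sigmaMin A • 1 ≤ A := by
  rw [← Algebra.algebraMap_eq_smul_one, algebraMap_le_iff_le_spectrum (a := A) (ha := hA.1),
    hA.1.spectrum_real_eq_range_eigenvalues]
  rintro _ ⟨i, rfl⟩
  simpa only [abs_of_nonneg (hA.eigenvalues_nonneg i)] using sigmaMin_le_abs_eigenvalues hA.1 i

lemma sigmaMin_add_sigmaMin_smul_one_le {A B : Matrix α α ℝ} (hA : A.PosSemidef)
    (hB : B.PosSemidef) : (sigmaMin A + sigmaMin B) • 1 ≤ A + B := by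
  rw [add_smul]
  exact add_le_add (sigmaMin_smul_one_le hA) (sigmaMin_smul_one_le hB)

lemma mul_frobNorm_sq_le_trace {s : ℝ} {A : Matrix α α ℝ} (hA : s • 1 ≤ A) (B : Matrix β α ℝ) :
    s * frobNorm B ^ 2 ≤ (B * A * Bᵀ).trace := by
  have hpsd : (B * (A - s • 1) * Bᵀ).PosSemidef := (le_iff.mp hA).mul_mul_conjTranspose_same B
  have htrace : (B * (A - s • 1) * Bᵀ).trace = (B * A * Bᵀ).trace - s * frobNorm B ^ 2 := by
    rw [Matrix.mul_sub, Matrix.sub_mul, trace_sub, Matrix.mul_smul, Matrix.mul_one,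
      Matrix.smul_mul, trace_smul, smul_eq_mul, frobNorm_sq]
  exact sub_nonneg.mp (htrace ▸ hpsd.trace_nonneg)

lemma sigmaMin_gram_mul_frobNorm_sq_le (D : Matrix β α ℝ) (K : Matrix α γ ℝ) :
    sigmaMin (Dᵀ * D) * frobNorm K ^ 2 ≤ frobNorm (D * K) ^ 2 := by
  have hgram : (Dᵀ * D).PosSemidef := posSemidef_conjTranspose_mul_self D
  calc sigmaMin (Dᵀ * D) * frobNorm K ^ 2
      = sigmaMin (Dᵀ * D) * frobNorm Kᵀ ^ 2 := by rw [frobNorm_transpose]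
    _ ≤ (Kᵀ * (Dᵀ * D) * Kᵀᵀ).trace := mul_frobNorm_sq_le_trace (sigmaMin_smul_one_le hgram) Kᵀ
    _ = ((D * K)ᵀ * (D * K)ᵀᵀ).trace := by
        simp only [transpose_mul, transpose_transpose, Matrix.mul_assoc]
    _ = frobNorm (D * K) ^ 2 := by rw [← frobNorm_sq, frobNorm_transpose]

lemma sigmaMin_gram_mul_mul_frobNorm_sq_le_trace [DecidableEq γ] {s : ℝ} {A : Matrix γ γ ℝ}
    (hs : 0 ≤ s) (hA : s • 1 ≤ A) (D : Matrix β α ℝ) (K : Matrix α γ ℝ) :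
    sigmaMin (Dᵀ * D) * s * frobNorm K ^ 2 ≤ (D * K * A * (D * K)ᵀ).trace :=
  calc sigmaMin (Dᵀ * D) * s * frobNorm K ^ 2
      = s * (sigmaMin (Dᵀ * D) * frobNorm K ^ 2) := by ring
    _ ≤ s * frobNorm (D * K) ^ 2 :=
        mul_le_mul_of_nonneg_left (sigmaMin_gram_mul_frobNorm_sq_le D K) hs
    _ ≤ (D * K * A * (D * K)ᵀ).trace := mul_frobNorm_sq_le_trace hA (D * K)

end Loewner

section CrossMoment

variable {Ω : Type*} [MeasurableSpace Ω] {μ : Measure Ω} {α β γ : Type*}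

/-- The matrix of cross moments `E[x yᵀ]` of two random vectors exists and equals `M`. It is stated
entrywise, with integrability included, so that `M` is never a junk value of the integral. For
centred vectors, `HasCrossMoment x x V μ` says that `x` has covariance matrix `V`, and
`HasCrossMoment x y 0 μ` that `x` and `y` are uncorrelated. -/
structure HasCrossMoment (x : Ω → α → ℝ) (y : Ω → β → ℝ) (M : Matrix α β ℝ) (μ : Measure Ω) :
    Prop where
  integrable_mul : ∀ i j, Integrable (fun ω => x ω i * y ω j) μ
  integral_mul : ∀ i j, ∫ ω, x ω i * y ω j ∂μ = M i j

namespace HasCrossMoment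

variable {x x' : Ω → α → ℝ} {y : Ω → β → ℝ} {M M' : Matrix α β ℝ}

lemma symm (h : HasCrossMoment x y M μ) : HasCrossMoment y x Mᵀ μ where
  integrable_mul i j := by simpa only [mul_comm] using h.integrable_mul j i
  integral_mul i j := by simpa only [mul_comm, transpose_apply] using h.integral_mul j i

lemma add_left (h : HasCrossMoment x y M μ) (h' : HasCrossMoment x' y M' μ) :
    HasCrossMoment (fun ω => x ω + x' ω) y (M + M') μ where
  integrable_mul i j := by
    simp only [Pi.add_apply, add_mul]
    exact (h.integrable_mul i j).add (h'.integrable_mul i j)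
  integral_mul i j := by
    simp only [Pi.add_apply, add_mul, Matrix.add_apply]
    rw [integral_add (h.integrable_mul i j) (h'.integrable_mul i j), h.integral_mul,
      h'.integral_mul]

lemma mulVec_left [Fintype α] (h : HasCrossMoment x y M μ) (A : Matrix γ α ℝ) :
    HasCrossMoment (fun ω => A *ᵥ x ω) y (A * M) μ := by
  have hexpand (i : γ) (j : β) (ω : Ω) :
      (A *ᵥ x ω) i * y ω j = ∑ k, A i k * (x ω k * y ω j) := by
    simp only [mulVec, dotProduct, Finset.sum_mul, mul_assoc]
  have hint (i : γ) (j : β) (k : α) : Integrable (fun ω => A i k * (x ω k * y ω j)) μ :=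
    (h.integrable_mul k j).const_mul _
  refine ⟨fun i j => ?_, fun i j => ?_⟩ <;> simp only [hexpand]
  · exact integrable_finsetSum _ fun k _ => hint i j k
  · simp only [integral_finsetSum _ fun k _ => hint i j k, integral_const_mul, h.integral_mul,
      mul_apply]

lemma mulVec_self [Fintype α] {V : Matrix α α ℝ} (h : HasCrossMoment x x V μ)
    (A : Matrix γ α ℝ) :
    HasCrossMoment (fun ω => A *ᵥ x ω) (fun ω => A *ᵥ x ω) (A * V * Aᵀ) μ := by
  simpa only [transpose_mul, transpose_transpose, Matrix.mul_assoc] using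
    ((h.mulVec_left A).symm.mulVec_left A).symm

lemma add_self {V V' : Matrix α α ℝ} (h : HasCrossMoment x x V μ) (h' : HasCrossMoment x' x' V' μ)
    (huncorr : HasCrossMoment x x' 0 μ) :
    HasCrossMoment (fun ω => x ω + x' ω) (fun ω => x ω + x' ω) (V + V') μ := by
  have hleft : HasCrossMoment (fun ω => x ω + x' ω) x V μ := by
    simpa using h.add_left huncorr.symm
  have hright : HasCrossMoment (fun ω => x ω + x' ω) x' V' μ := by
    simpa using huncorr.add_left h'
  simpa using (hleft.symm.add_left hright.symm).symm

lemma integral_sum_sq [Fintype α] {V : Matrix α α ℝ} (h : HasCrossMoment x x V μ) :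
    ∫ ω, ∑ i, x ω i ^ 2 ∂μ = V.trace := by
  simp only [sq, integral_finsetSum _ fun i _ => h.integrable_mul i i, h.integral_mul, trace,
    diag_apply]

lemma posSemidef [Finite α] {V : Matrix α α ℝ} (h : HasCrossMoment x x V μ) : V.PosSemidef := by
  have := Fintype.ofFinite α
  refine .of_dotProduct_mulVec_nonneg (ext fun i j => ?_) fun a => ?_
  · rw [conjTranspose_apply, star_trivial, ← h.integral_mul j i, ← h.integral_mul i j]
    simp only [mul_comm]
  · let A : Matrix Unit α ℝ := replicateRow Unit a
    have hquad : star a ⬝ᵥ (V *ᵥ a) = ∫ ω, (A *ᵥ x ω) () * (A *ᵥ x ω) () ∂μ := by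
      rw [(h.mulVec_self A).integral_mul, star_trivial, dotProduct_mulVec]
      rfl
    exact hquad ▸ integral_nonneg fun ω => mul_self_nonneg _

lemma integrable [IsFiniteMeasure μ] {V : Matrix α α ℝ} (h : HasCrossMoment x x V μ) {i : α}
    (hx : AEMeasurable (fun ω => x ω i) μ) : Integrable (fun ω => x ω i) μ := by
  have hsq : Integrable (fun ω => x ω i ^ 2) μ := by simpa only [sq] using h.integrable_mul i i
  exact ((memLp_two_iff_integrable_sq hx.aestronglyMeasurable).mpr hsq).integrable one_le_two

lemma zero_of_indepFun (hindep : IndepFun x y μ) (hx : ∀ i, Integrable (fun ω => x ω i) μ)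
    (hy : ∀ j, Integrable (fun ω => y ω j) μ) (hmean : ∀ i, ∫ ω, x ω i ∂μ = 0) :
    HasCrossMoment x y 0 μ := by
  have hcoord (i : α) (j : β) : IndepFun (fun ω => x ω i) (fun ω => y ω j) μ :=
    hindep.comp (measurable_pi_apply i) (measurable_pi_apply j)
  refine ⟨fun i j => (hcoord i j).integrable_mul (hx i) (hy j), fun i j => ?_⟩
  rw [(hcoord i j).integral_fun_mul_eq_mul_integral (hx i).1 (hy j).1, hmean, zero_mul,
    Matrix.zero_apply]

end HasCrossMoment

end CrossMoment

theorem stmt_1_general {Ω l m n p : Type*} [MeasurableSpace Ω] {μ : Measure Ω}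
    [Fintype l] [Fintype m] [Fintype n] [Fintype p] [DecidableEq m] [DecidableEq p]
    (D : Matrix l m ℝ) (C : Matrix p n ℝ) {x : Ω → n → ℝ} {v : Ω → p → ℝ}
    {Vxx : Matrix n n ℝ} {Vvv : Matrix p p ℝ} (hx : HasCrossMoment x x Vxx μ)
    (hv : HasCrossMoment v v Vvv μ) (huncorr : HasCrossMoment x v 0 μ) (K : Matrix m p ℝ) :
    sigmaMin (Dᵀ * D) * (sigmaMin (C * Vxx * Cᵀ) + sigmaMin Vvv) * frobNorm K ^ 2 ≤
      ∫ ω, ∑ j, (D *ᵥ (K *ᵥ (C *ᵥ x ω + v ω))) j ^ 2 ∂μ := by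
  have hCx := hx.mulVec_self C
  have hCxv : HasCrossMoment (fun ω => C *ᵥ x ω) v 0 μ := by simpa using huncorr.mulVec_left C
  have hz := hCx.add_self hv hCxv
  simp only [mulVec_mulVec]
  rw [(hz.mulVec_self (D * K)).integral_sum_sq]
  exact sigmaMin_gram_mul_mul_frobNorm_sq_le_trace
    (add_nonneg (sigmaMin_nonneg _) (sigmaMin_nonneg _))
    (sigmaMin_add_sigmaMin_smul_one_le hCx.posSemidef hv.posSemidef) D K

/-- For every `K ∈ ℝ^{m×p}`,
`E[‖D K (C x + v)‖₂²] ≥ σ_min(Dᵀ D) (σ_min(C V_xx Cᵀ) + σ_min(V_vv)) ‖K‖_F²`. -/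
theorem stmt_1
    {Ω : Type*} [MeasurableSpace Ω] (μ : Measure Ω) [IsProbabilityMeasure μ]
    (n p l m : ℕ) (hn : 0 < n) (hp : 0 < p) (hl : 0 < l) (hm : 0 < m)
    (D : Matrix (Fin l) (Fin m) ℝ) (C : Matrix (Fin p) (Fin n) ℝ)
    (x : Ω → Fin n → ℝ) (v : Ω → Fin p → ℝ)
    (hxmeas : Measurable x) (hvmeas : Measurable v)
    (hindep : IndepFun x v μ)
    (hxmean : ∀ i, ∫ ω, x ω i ∂μ = 0) (hvmean : ∀ i, ∫ ω, v ω i ∂μ = 0)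
    (Vxx : Matrix (Fin n) (Fin n) ℝ) (Vvv : Matrix (Fin p) (Fin p) ℝ)
    (hVxxInt : ∀ i j, Integrable (fun ω => x ω i * x ω j) μ)
    (hVxx : ∀ i j, ∫ ω, x ω i * x ω j ∂μ = Vxx i j)
    (hVvvInt : ∀ i j, Integrable (fun ω => v ω i * v ω j) μ)
    (hVvv : ∀ i j, ∫ ω, v ω i * v ω j ∂μ = Vvv i j)
    (K : Matrix (Fin m) (Fin p) ℝ) :
    sigmaMin (Dᵀ * D) * (sigmaMin (C * Vxx * Cᵀ) + sigmaMin Vvv) * (frobNorm K) ^ 2 ≤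
      ∫ ω, ∑ j, (D.mulVec (K.mulVec (C.mulVec (x ω) + v ω)) j) ^ 2 ∂μ := by
  have hx : HasCrossMoment x x Vxx μ := ⟨hVxxInt, hVxx⟩
  have hv : HasCrossMoment v v Vvv μ := ⟨hVvvInt, hVvv⟩
  exact stmt_1_general D C hx hv (.zero_of_indepFun hindep
    (fun _ => hx.integrable hxmeas.eval.aemeasurable)
    (fun _ => hv.integrable hvmeas.eval.aemeasurable) hxmean) K
end

section
/- If ‖K‖₂ ≤ b_K, then the fourth moment of the loss satisfies E[(zᵀ z)²] ≤ (‖H‖₂ + ‖D‖₂ ‖C‖₂ b_K + ‖D‖₂ b_K)⁴ (κ_x + 2 Tr V_xx Tr V_vv + κ_v). -/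
open MeasureTheory ProbabilityTheory Matrix

/-!
The loss vector satisfies `‖z‖ ≤ a ‖x‖ + b ‖v‖` with `a = ‖H‖ + ‖D‖ ‖C‖ b_K` and `b = ‖D‖ b_K`,
hence `‖z‖² ≤ (a + b)² (‖x‖² + ‖v‖²)` by the Cauchy–Schwarz inequality in the plane. Squaring and
integrating, independence factors the mixed term `E[‖x‖² ‖v‖²]` into `Tr V_xx · Tr V_vv`.
-/

section Deterministic

lemma mul_add_mul_sq_le_add_sq_mul {a b : ℝ} (ha : 0 ≤ a) (hb : 0 ≤ b) (s t : ℝ) :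
    (a * s + b * t) ^ 2 ≤ (a + b) ^ 2 * (s ^ 2 + t ^ 2) :=
  have hab : 0 ≤ a * b := mul_nonneg ha hb
  calc (a * s + b * t) ^ 2
      ≤ (a ^ 2 + b ^ 2) * (s ^ 2 + t ^ 2) := by linarith [sq_nonneg (a * t - b * s)]
    _ ≤ (a + b) ^ 2 * (s ^ 2 + t ^ 2) := by gcongr; linarith

lemma norm_add_feedback_le {𝕜 E F G P : Type*} [NontriviallyNormedField 𝕜]
    [SeminormedAddCommGroup E] [NormedSpace 𝕜 E] [SeminormedAddCommGroup F] [NormedSpace 𝕜 F]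
    [SeminormedAddCommGroup G] [NormedSpace 𝕜 G] [SeminormedAddCommGroup P] [NormedSpace 𝕜 P]
    (H : E →L[𝕜] F) (D : G →L[𝕜] F) (C : E →L[𝕜] P) {K : P →L[𝕜] G} {b : ℝ} (hK : ‖K‖ ≤ b)
    (x : E) (v : P) :
    ‖H x + D (K (C x + v))‖ ≤ (‖H‖ + ‖D‖ * ‖C‖ * b) * ‖x‖ + ‖D‖ * b * ‖v‖ := by
  have hy : ‖C x + v‖ ≤ ‖C‖ * ‖x‖ + ‖v‖ := norm_add_le_of_le (C.le_opNorm x) le_rfl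
  calc ‖H x + D (K (C x + v))‖
      ≤ ‖H‖ * ‖x‖ + ‖D‖ * (b * (‖C‖ * ‖x‖ + ‖v‖)) :=
        norm_add_le_of_le (H.le_opNorm x) (D.le_opNorm_of_le (K.le_of_opNorm_le_of_le hK hy))
    _ = (‖H‖ + ‖D‖ * ‖C‖ * b) * ‖x‖ + ‖D‖ * b * ‖v‖ := by ring

variable {ι κ ν π : Type*} [Fintype ι] [Fintype κ] [Fintype ν] [Fintype π]
  [DecidableEq κ] [DecidableEq ν] [DecidableEq π]

lemma opNorm_nonneg (A : Matrix ι κ ℝ) : 0 ≤ opNorm A := norm_nonneg _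

lemma sum_sq_mulVec_add_feedback_le (H : Matrix ι ν ℝ) (D : Matrix ι κ ℝ) (C : Matrix π ν ℝ)
    {K : Matrix κ π ℝ} {b : ℝ} (hK : opNorm K ≤ b) (x : ν → ℝ) (v : π → ℝ) :
    ∑ j, ((H.mulVec x + D.mulVec (K.mulVec (C.mulVec x + v))) j) ^ 2
      ≤ (opNorm H + opNorm D * opNorm C * b + opNorm D * b) ^ 2
        * (∑ i, x i ^ 2 + ∑ i, v i ^ 2) := by
  have hb : 0 ≤ b := (opNorm_nonneg K).trans hK
  have hH := opNorm_nonneg H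
  have hD := opNorm_nonneg D
  have hC := opNorm_nonneg C
  have hz : ‖WithLp.toLp 2 (H.mulVec x + D.mulVec (K.mulVec (C.mulVec x + v)))‖
      ≤ (opNorm H + opNorm D * opNorm C * b) * ‖WithLp.toLp 2 x‖
        + opNorm D * b * ‖WithLp.toLp 2 v‖ :=
    norm_add_feedback_le (toEuclideanLin H).toContinuousLinearMap
      (toEuclideanLin D).toContinuousLinearMap (toEuclideanLin C).toContinuousLinearMap hK _ _
  simpa only [EuclideanSpace.real_norm_sq_eq] using
    (pow_le_pow_left₀ (norm_nonneg _) hz 2).trans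
      (mul_add_mul_sq_le_add_sq_mul (by positivity) (by positivity) _ _)

end Deterministic

section Moments

lemma measurable_sum_sq {ι : Type*} [Fintype ι] : Measurable fun w : ι → ℝ => ∑ i, w i ^ 2 := by
  fun_prop

variable {Ω : Type*} [MeasurableSpace Ω] {μ : Measure Ω}

lemma integral_add_sq_of_indepFun {U W : Ω → ℝ} (hU : MemLp U 2 μ)
    (hW : MemLp W 2 μ) (hUW : IndepFun U W μ) :
    ∫ ω, (U ω + W ω) ^ 2 ∂μ
      = ∫ ω, U ω ^ 2 ∂μ + 2 * (∫ ω, U ω ∂μ) * (∫ ω, W ω ∂μ) + ∫ ω, W ω ^ 2 ∂μ := by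
  have hmul : Integrable (fun ω => 2 * (U ω * W ω)) μ := (hU.integrable_mul hW).const_mul 2
  calc ∫ ω, (U ω + W ω) ^ 2 ∂μ
      = ∫ ω, (U ω ^ 2 + 2 * (U ω * W ω) + W ω ^ 2) ∂μ := by
        congr with ω; ring
    _ = ∫ ω, U ω ^ 2 ∂μ + 2 * ∫ ω, U ω * W ω ∂μ + ∫ ω, W ω ^ 2 ∂μ := by
        rw [integral_add (hU.integrable_sq.fun_add hmul) hW.integrable_sq,
          integral_add hU.integrable_sq hmul, integral_const_mul]
    _ = ∫ ω, U ω ^ 2 ∂μ + 2 * (∫ ω, U ω ∂μ) * (∫ ω, W ω ∂μ) + ∫ ω, W ω ^ 2 ∂μ := by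
        rw [hUW.integral_fun_mul_eq_mul_integral hU.1 hW.1, mul_assoc]

lemma integral_sq_le_of_le_mul_add {Q U W : Ω → ℝ} {c : ℝ}
    (hU : MemLp U 2 μ) (hW : MemLp W 2 μ) (hUW : IndepFun U W μ) (hQ : ∀ᵐ ω ∂μ, 0 ≤ Q ω)
    (hQUW : ∀ᵐ ω ∂μ, Q ω ≤ c * (U ω + W ω)) :
    ∫ ω, Q ω ^ 2 ∂μ
      ≤ c ^ 2 * (∫ ω, U ω ^ 2 ∂μ + 2 * (∫ ω, U ω ∂μ) * (∫ ω, W ω ∂μ) + ∫ ω, W ω ^ 2 ∂μ) := by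
  have hsq : ∀ᵐ ω ∂μ, Q ω ^ 2 ≤ c ^ 2 * (U ω + W ω) ^ 2 := by
    filter_upwards [hQ, hQUW] with ω hQω hQUWω
    exact (pow_le_pow_left₀ hQω hQUWω 2).trans_eq (mul_pow _ _ _)
  calc ∫ ω, Q ω ^ 2 ∂μ
      ≤ ∫ ω, c ^ 2 * (U ω + W ω) ^ 2 ∂μ :=
        integral_mono_of_nonneg (.of_forall fun ω => sq_nonneg (Q ω))
          ((hU.add hW).integrable_sq.const_mul _) hsq
    _ = _ := by rw [integral_const_mul, integral_add_sq_of_indepFun hU hW hUW]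

variable {ι : Type*} [Fintype ι] {x : Ω → ι → ℝ}

lemma memLp_two_sum_sq (hx : AEMeasurable x μ)
    (hx4 : Integrable (fun ω => (∑ i, x ω i ^ 2) ^ 2) μ) :
    MemLp (fun ω => ∑ i, x ω i ^ 2) 2 μ :=
  (memLp_two_iff_integrable_sq (by fun_prop)).2 hx4

lemma integrable_mul_self_of_integrable_sum_sq (hx : AEMeasurable x μ)
    (hx2 : Integrable (fun ω => ∑ i, x ω i ^ 2) μ) (i : ι) :
    Integrable (fun ω => x ω i * x ω i) μ := by
  refine hx2.mono' (by fun_prop) (.of_forall fun ω => ?_)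
  rw [Real.norm_of_nonneg (mul_self_nonneg _), ← sq]
  exact Finset.single_le_sum (fun j _ => sq_nonneg (x ω j)) (Finset.mem_univ i)

lemma integral_sum_sq_eq_trace (hx : AEMeasurable x μ)
    (hx2 : Integrable (fun ω => ∑ i, x ω i ^ 2) μ) {V : Matrix ι ι ℝ}
    (hV : ∀ i, ∫ ω, x ω i * x ω i ∂μ = V i i) :
    ∫ ω, ∑ i, x ω i ^ 2 ∂μ = V.trace := by
  simp only [sq, Matrix.trace, Matrix.diag_apply, ← hV]
  exact integral_finsetSum _ fun i _ => integrable_mul_self_of_integrable_sum_sq hx hx2 i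

lemma aemeasurable_mulVec {κ : Type*} (A : Matrix κ ι ℝ) (hx : AEMeasurable x μ) :
    AEMeasurable (fun ω => A.mulVec (x ω)) μ :=
  have hA : Measurable A.mulVec := measurable_pi_lambda _ fun i => by
    unfold mulVec dotProduct
    fun_prop
  hA.comp_aemeasurable hx

lemma aemeasurable_sum_sq_mulVec_add_feedback {ν π κ : Type*} [Fintype ν] [Fintype π] [Fintype κ]
    (H : Matrix ι ν ℝ) (D : Matrix ι κ ℝ) (C : Matrix π ν ℝ) (K : Matrix κ π ℝ)
    {x : Ω → ν → ℝ} {v : Ω → π → ℝ} (hx : AEMeasurable x μ) (hv : AEMeasurable v μ) :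
    AEMeasurable (fun ω =>
      ∑ j, ((H.mulVec (x ω) + D.mulVec (K.mulVec (C.mulVec (x ω) + v ω))) j) ^ 2) μ :=
  measurable_sum_sq.comp_aemeasurable <| (aemeasurable_mulVec H hx).add <|
    aemeasurable_mulVec D <| aemeasurable_mulVec K <| (aemeasurable_mulVec C hx).add hv

end Moments

theorem stmt_4_general {Ω ν π ι κ : Type*} [MeasurableSpace Ω] {μ : Measure Ω} [IsFiniteMeasure μ]
    [Fintype ν] [Fintype π] [Fintype ι] [Fintype κ] [DecidableEq ν] [DecidableEq π] [DecidableEq κ]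
    (H : Matrix ι ν ℝ) (D : Matrix ι κ ℝ) (C : Matrix π ν ℝ) {bK : ℝ}
    {x : Ω → ν → ℝ} {v : Ω → π → ℝ} (hx : AEMeasurable x μ) (hv : AEMeasurable v μ)
    (hindep : IndepFun x v μ) {Vxx : Matrix ν ν ℝ} {Vvv : Matrix π π ℝ}
    (hVxx : ∀ i j, ∫ ω, x ω i * x ω j ∂μ = Vxx i j)
    (hVvv : ∀ i j, ∫ ω, v ω i * v ω j ∂μ = Vvv i j) {κx κv : ℝ}
    (hx4Int : Integrable (fun ω => (∑ i, x ω i ^ 2) ^ 2) μ)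
    (hx4 : ∫ ω, (∑ i, x ω i ^ 2) ^ 2 ∂μ ≤ κx)
    (hv4Int : Integrable (fun ω => (∑ i, v ω i ^ 2) ^ 2) μ)
    (hv4 : ∫ ω, (∑ i, v ω i ^ 2) ^ 2 ∂μ ≤ κv)
    {K : Matrix κ π ℝ} (hK : opNorm K ≤ bK) :
    Integrable (fun ω =>
        (∑ j, ((H.mulVec (x ω) + D.mulVec (K.mulVec (C.mulVec (x ω) + v ω))) j) ^ 2) ^ 2) μ ∧
      ∫ ω, (∑ j, ((H.mulVec (x ω) + D.mulVec (K.mulVec (C.mulVec (x ω) + v ω))) j) ^ 2) ^ 2 ∂μ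
        ≤ (opNorm H + opNorm D * opNorm C * bK + opNorm D * bK) ^ 4
          * (κx + 2 * Vxx.trace * Vvv.trace + κv) := by
  let Q (ω : Ω) : ℝ := ∑ j, ((H.mulVec (x ω) + D.mulVec (K.mulVec (C.mulVec (x ω) + v ω))) j) ^ 2
  have hU := memLp_two_sum_sq hx hx4Int
  have hW := memLp_two_sum_sq hv hv4Int
  have hUW : IndepFun (fun ω => ∑ i, x ω i ^ 2) (fun ω => ∑ i, v ω i ^ 2) μ :=
    hindep.comp measurable_sum_sq measurable_sum_sq
  have hQ (ω) : 0 ≤ Q ω := Finset.sum_nonneg fun _ _ => sq_nonneg _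
  have hQUW (ω) := sum_sq_mulVec_add_feedback_le H D C hK (x ω) (v ω)
  have hQmeas : AEMeasurable Q μ := aemeasurable_sum_sq_mulVec_add_feedback H D C K hx hv
  have hQ2 : MemLp Q 2 μ := ((hU.add hW).const_mul _).mono' hQmeas.aestronglyMeasurable
    (.of_forall fun ω => (Real.norm_of_nonneg (hQ ω)).trans_le (hQUW ω))
  refine ⟨hQ2.integrable_sq, (integral_sq_le_of_le_mul_add hU hW hUW (.of_forall hQ)
    (.of_forall hQUW)).trans ?_⟩
  rw [integral_sum_sq_eq_trace hx (hU.integrable one_le_two) fun i => hVxx i i,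
    integral_sum_sq_eq_trace hv (hW.integrable one_le_two) fun i => hVvv i i, ← pow_mul]
  exact mul_le_mul_of_nonneg_left (by gcongr) (Even.pow_nonneg (by decide) _)

/-- If `‖K‖₂ ≤ b_K`, then
`E[(zᵀz)²] ≤ (‖H‖₂ + ‖D‖₂‖C‖₂ b_K + ‖D‖₂ b_K)⁴ (κ_x + 2 Tr V_xx Tr V_vv + κ_v)`. -/
theorem stmt_4
    {Ω : Type*} [MeasurableSpace Ω] (μ : Measure Ω) [IsProbabilityMeasure μ]
    (n p l m : ℕ) (hn : 0 < n) (hp : 0 < p) (hl : 0 < l) (hm : 0 < m)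
    (H : Matrix (Fin l) (Fin n) ℝ) (D : Matrix (Fin l) (Fin m) ℝ)
    (C : Matrix (Fin p) (Fin n) ℝ) (bK : ℝ) (hbK : 0 < bK)
    (x : Ω → Fin n → ℝ) (v : Ω → Fin p → ℝ)
    (hxmeas : Measurable x) (hvmeas : Measurable v)
    (hindep : IndepFun x v μ)
    (hxmean : ∀ i, ∫ ω, x ω i ∂μ = 0) (hvmean : ∀ i, ∫ ω, v ω i ∂μ = 0)
    (Vxx : Matrix (Fin n) (Fin n) ℝ) (Vvv : Matrix (Fin p) (Fin p) ℝ)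
    (hVxxInt : ∀ i j, Integrable (fun ω => x ω i * x ω j) μ)
    (hVxx : ∀ i j, ∫ ω, x ω i * x ω j ∂μ = Vxx i j)
    (hVvvInt : ∀ i j, Integrable (fun ω => v ω i * v ω j) μ)
    (hVvv : ∀ i j, ∫ ω, v ω i * v ω j ∂μ = Vvv i j)
    (κx κv : ℝ)
    (hx4Int : Integrable (fun ω => (∑ i, (x ω i) ^ 2) ^ 2) μ)
    (hx4 : ∫ ω, (∑ i, (x ω i) ^ 2) ^ 2 ∂μ ≤ κx)
    (hv4Int : Integrable (fun ω => (∑ i, (v ω i) ^ 2) ^ 2) μ)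
    (hv4 : ∫ ω, (∑ i, (v ω i) ^ 2) ^ 2 ∂μ ≤ κv)
    (K : Matrix (Fin m) (Fin p) ℝ) (hK : opNorm K ≤ bK) :
    (∫ ω, (∑ j, ((H.mulVec (x ω) + D.mulVec (K.mulVec (C.mulVec (x ω) + v ω))) j) ^ 2) ^ 2 ∂μ)
      ≤ (opNorm H + opNorm D * opNorm C * bK + opNorm D * bK) ^ 4
        * (κx + 2 * Vxx.trace * Vvv.trace + κv) := by
  exact (stmt_4_general H D C hxmeas.aemeasurable hvmeas.aemeasurable hindep hVxx hVvv
    hx4Int hx4 hv4Int hv4 hK).2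
end
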